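/- Assume (S), (F1∞)–(F3∞), (C1∞)–(C2∞) and (E∞), and let h∞ : {z ∈ H⁰∞ : ‖z‖ ≥ R₁} → {x ∈ X^±∞ : ‖x‖_X ≤ ρ_A} be the unique map satisfying (I−P⁰∞)A(z + h∞(z)) = θ for all z ∈ H⁰∞ with ‖z‖ ≥ R₁ (it exists after increasing R₁ if necessary). Then the function L∞ defined by L∞(z) = L(z + h∞(z)) is continuously Fréchet differentiable (C¹) on {z ∈ H⁰∞ : ‖z‖ > R₁}, and dL∞(z₀)(z) = (A(z₀ + h∞(z₀)), z)_H for all z₀ ∈ H⁰∞ with ‖z₀‖ > R₁ and all z ∈ H⁰∞. -/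

import Mathlib

/-! Since `DL(x)(u) = (A(x), u)_H` with `A` continuous into `X`, the mean value inequality along
segments upgrades the directional derivatives of `L ∘ emb` to Fréchet derivatives
(`LuSetting.hasFDerivAt_L_emb`). Condition (E∞), extended by continuity to the closed ball of radius `ρ_A`
(`LuSetting.econd_closed`), together with the defining equation of `h∞` makes `h∞` Lipschitz with
constant `1 / (κ - 1)` (`LuSetting.lipschitz_h`); `h∞` itself need not be differentiable.
The equation `(I − P⁰∞)A(z + h∞(z)) = θ` says that `A(z + h∞(z)) ∈ H⁰∞`, hence it is orthogonal to
`h∞(z') - h∞(z) ∈ H^±∞`. So in the first order expansion of `L` at `z + h∞(z)` the increment of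
`h∞` contributes nothing to the linear term, and by the Lipschitz bound it only changes the
remainder by a constant factor.
-/

open Filter Topology Set RealInnerProductSpace

noncomputable section

/-- The setting of Lu's splitting lemmas at infinity: a real Hilbert space `H`, a Banach
space `X` densely and continuously embedded in `H` (condition (S)), a neighborhood of
infinity `V`, a functional `L` satisfying (F1∞)–(F3∞), conditions (C1∞)–(C2∞), and the
spectral decomposition `H = H⁰∞ ⊕ H⁺∞ ⊕ H⁻∞` of `B(∞)` with the associated orthogonal
projections. -/
structure LuSetting (X H : Type*) [NormedAddCommGroup X] [NormedSpace ℝ X]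
    [NormedAddCommGroup H] [InnerProductSpace ℝ H] [CompleteSpace H] where
  /-- the inclusion `X ↪ H` -/
  emb : X →L[ℝ] H
  emb_inj : Function.Injective emb
  emb_dense : DenseRange emb
  emb_norm : ∀ x : X, ‖emb x‖ ≤ ‖x‖
  /-- `V` is a neighborhood of infinity in `H` -/
  R₀ : ℝ
  R₀_pos : 0 < R₀
  V : Set H
  V_open : IsOpen V
  V_infty : {u : H | R₀ < ‖u‖} ⊆ V
  /-- the functional `L` and its directional differential `DL` (condition (F1∞)) -/
  L : H → ℝ
  DL : H → H → ℝ
  L_cont : ContinuousOn L V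
  DL_deriv : ∀ x ∈ V, ∀ u : H,
    Filter.Tendsto (fun t : ℝ => (L (x + t • u) - L x) / t) (𝓝[≠] 0) (𝓝 (DL x u))
  DL_cont : ContinuousOn (fun p : H × H => DL p.1 p.2) (V ×ˢ Set.univ)
  /-- the map `A` and its directional differential `DA` (condition (F2∞)) -/
  A : X → X
  DA : X → X → X
  A_cont : ContinuousOn A {x : X | emb x ∈ V}
  DA_deriv : ∀ x : X, emb x ∈ V → ∀ u : X,
    Filter.Tendsto (fun t : ℝ => t⁻¹ • (A (x + t • u) - A x)) (𝓝[≠] 0) (𝓝 (DA x u))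
  DA_cont : ContinuousOn (fun p : X × X => DA p.1 p.2) ({x : X | emb x ∈ V} ×ˢ Set.univ)
  A_repr : ∀ x : X, emb x ∈ V → ∀ u : X, DL (emb x) (emb u) = ⟪emb (A x), emb u⟫
  /-- the operators `B(x)` and `B(∞)` (condition (F3∞)) -/
  B : X → H →L[ℝ] H
  Binf : H →L[ℝ] H
  B_symm : ∀ x : X, emb x ∈ V → ∀ u v : H, ⟪B x u, v⟫ = ⟪u, B x v⟫
  Binf_symm : ∀ u v : H, ⟪Binf u, v⟫ = ⟪u, Binf v⟫
  /-- `B(∞)` preserves `X`; `BinfX` is its restriction `X → X` -/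
  BinfX : X →L[ℝ] X
  BinfX_emb : ∀ x : X, emb (BinfX x) = Binf (emb x)
  B_repr : ∀ x : X, emb x ∈ V → ∀ u v : X, ⟪emb (DA x u), emb v⟫ = ⟪B x (emb u), emb v⟫
  /-- (C1∞): `0` is not in the spectrum of `B(∞)`, or is an isolated point of it -/
  C1 : (0 : ℝ) ∉ spectrum ℝ Binf ∨ ∃ ε > (0 : ℝ), ∀ μ ∈ spectrum ℝ Binf, μ = 0 ∨ ε ≤ |μ|
  /-- (C2∞) -/
  C2 : ∀ u : H, (∃ w : X, emb w = Binf u) → ∃ x : X, emb x = u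
  /-- the kernel `H⁰∞` of `B(∞)` and the positive and negative definite subspaces
  `H⁺∞`, `H⁻∞`, forming an orthogonal decomposition of `H` invariant under `B(∞)` -/
  H0 : Submodule ℝ H
  Hp : Submodule ℝ H
  Hm : Submodule ℝ H
  H0_eq : ∀ u : H, u ∈ H0 ↔ Binf u = 0
  Hp_closed : IsClosed (Hp : Set H)
  Hm_closed : IsClosed (Hm : Set H)
  orth_pm : ∀ u ∈ Hp, ∀ v ∈ Hm, ⟪u, v⟫ = 0
  orth_0p : ∀ u ∈ H0, ∀ v ∈ Hp, ⟪u, v⟫ = 0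
  orth_0m : ∀ u ∈ H0, ∀ v ∈ Hm, ⟪u, v⟫ = 0
  span_all : H0 ⊔ Hp ⊔ Hm = ⊤
  Binf_Hp : ∀ u ∈ Hp, Binf u ∈ Hp
  Binf_Hm : ∀ u ∈ Hm, Binf u ∈ Hm
  /-- the definiteness gap `a∞ > 0` -/
  ainf : ℝ
  ainf_pos : 0 < ainf
  Binf_posdef : ∀ u ∈ Hp, 2 * ainf * ‖u‖ ^ 2 ≤ ⟪Binf u, u⟫
  Binf_negdef : ∀ u ∈ Hm, ⟪Binf u, u⟫ ≤ -(2 * ainf * ‖u‖ ^ 2)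
  /-- the orthogonal projection `P⁰∞` onto `H⁰∞` -/
  P0 : H →L[ℝ] H
  P0_H0 : ∀ u ∈ H0, P0 u = u
  P0_Hp : ∀ u ∈ Hp, P0 u = (0 : H)
  P0_Hm : ∀ u ∈ Hm, P0 u = (0 : H)
  /-- the orthogonal projection `P⁺∞` onto `H⁺∞` -/
  Pp : H →L[ℝ] H
  Pp_H0 : ∀ u ∈ H0, Pp u = (0 : H)
  Pp_Hp : ∀ u ∈ Hp, Pp u = u
  Pp_Hm : ∀ u ∈ Hm, Pp u = (0 : H)
  /-- the orthogonal projection `P⁻∞` onto `H⁻∞` -/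
  Pm : H →L[ℝ] H
  Pm_H0 : ∀ u ∈ H0, Pm u = (0 : H)
  Pm_Hp : ∀ u ∈ Hp, Pm u = (0 : H)
  Pm_Hm : ∀ u ∈ Hm, Pm u = u
  /-- the restriction of `P⁰∞` to `X` (well defined since `H⁰∞ ⊆ X` by (C2∞)) -/
  P0X : X →L[ℝ] X
  P0X_emb : ∀ x : X, emb (P0X x) = P0 (emb x)

namespace LuSetting

variable {X H : Type*} [NormedAddCommGroup X] [NormedSpace ℝ X]
  [NormedAddCommGroup H] [InnerProductSpace ℝ H] [CompleteSpace H]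
variable (S : LuSetting X H)

/-- `H^±∞ = H⁺∞ ⊕ H⁻∞` -/
def Hpm : Submodule ℝ H := S.Hp ⊔ S.Hm

/-- `X^±∞ = H^±∞ ∩ X` -/
def Xpm : Submodule ℝ X := S.Hpm.comap (S.emb : X →ₗ[ℝ] H)

/-- the map `(I − P⁰∞)A : X → X` -/
def Aperp (x : X) : X := S.A x - S.P0X (S.A x)

/-- `{z ∈ H⁰∞ : ‖z‖ > R}`, realized inside `X` -/
def zdom (R : ℝ) : Set X := {z : X | S.emb z ∈ S.H0 ∧ R < ‖S.emb z‖}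

/-- `{z ∈ H⁰∞ : ‖z‖ ≥ R}`, realized inside `X` -/
def zdomCl (R : ℝ) : Set X := {z : X | S.emb z ∈ S.H0 ∧ R ≤ ‖S.emb z‖}

/-- the set `{z + u : z ∈ H⁰∞, ‖z‖ > R, u ∈ H^±∞}` -/
def slab (R : ℝ) : Set H := {w : H | ∃ z ∈ S.H0, ∃ u ∈ S.Hpm, R < ‖z‖ ∧ w = z + u}

/-- the set `C_{R,δ}` -/
def cyl (R δ : ℝ) : Set H :=
  {w : H | ∃ z ∈ S.H0, ∃ up ∈ S.Hp, ∃ um ∈ S.Hm,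
    R < ‖z‖ ∧ ‖up‖ < δ ∧ ‖um‖ < δ ∧ w = z + up + um}

/-- `C₁` is a bound for the norm of the inverse of the Banach isomorphism
`B(∞)|_{X^±∞} : X^±∞ → X^±∞` (in particular `C₁∞ ≤ C₁`) -/
def InvBound (C₁ : ℝ) : Prop :=
  0 < C₁ ∧ (∀ x ∈ S.Xpm, S.BinfX x ∈ S.Xpm) ∧
    (∀ y ∈ S.Xpm, ∃ x ∈ S.Xpm, S.BinfX x = y) ∧
    ∀ x ∈ S.Xpm, ‖x‖ ≤ C₁ * ‖S.BinfX x‖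

/-- `m` is an eventual bound for `‖(I−P⁰∞)A(z)‖_X` on `H⁰∞`, i.e. `M(A) ≤ m < ∞` -/
def MBound (m : ℝ) : Prop :=
  0 ≤ m ∧ ∃ R : ℝ, ∀ z : X, S.emb z ∈ S.H0 → R ≤ ‖z‖ → ‖S.Aperp z‖ ≤ m

/-- `M(A) = 0` -/
def MZero : Prop :=
  ∀ ε > (0 : ℝ), ∃ R : ℝ, ∀ z : X, S.emb z ∈ S.H0 → R ≤ ‖z‖ → ‖S.Aperp z‖ ≤ ε

/-- the estimate of condition (E∞), on the ball of radius `ρA` -/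
def Econd (C₁ R₁ κ ρA : ℝ) : Prop :=
  ∀ z₁ z₂ : X, S.emb z₁ ∈ S.H0 → S.emb z₂ ∈ S.H0 →
    R₁ ≤ ‖S.emb z₁‖ → R₁ ≤ ‖S.emb z₂‖ →
    ∀ x₁ x₂ : X, x₁ ∈ S.Xpm → x₂ ∈ S.Xpm → ‖x₁‖ < ρA → ‖x₂‖ < ρA →
      ‖S.Aperp (z₁ + x₁) - S.BinfX x₁ - S.Aperp (z₂ + x₂) + S.BinfX x₂‖ ≤
        1 / (κ * C₁) * ‖z₁ + x₁ - z₂ - x₂‖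

/-- the estimate of condition (E∞) with no ball restriction (the case `ρ_A = ∞`) -/
def EcondAll (C₁ R₁ κ : ℝ) : Prop :=
  ∀ z₁ z₂ : X, S.emb z₁ ∈ S.H0 → S.emb z₂ ∈ S.H0 →
    R₁ ≤ ‖S.emb z₁‖ → R₁ ≤ ‖S.emb z₂‖ →
    ∀ x₁ x₂ : X, x₁ ∈ S.Xpm → x₂ ∈ S.Xpm →
      ‖S.Aperp (z₁ + x₁) - S.BinfX x₁ - S.Aperp (z₂ + x₂) + S.BinfX x₂‖ ≤
        1 / (κ * C₁) * ‖z₁ + x₁ - z₂ - x₂‖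

/-- the estimate of condition (E'∞), on the ball of radius `ρA` -/
def Econd' (C₁ R₁ κ ρA : ℝ) : Prop :=
  ∀ z : X, S.emb z ∈ S.H0 → R₁ ≤ ‖S.emb z‖ →
    ∀ x₁ x₂ : X, x₁ ∈ S.Xpm → x₂ ∈ S.Xpm → ‖x₁‖ < ρA → ‖x₂‖ < ρA →
      ‖S.Aperp (z + x₁) - S.BinfX x₁ - S.Aperp (z + x₂) + S.BinfX x₂‖ ≤
        1 / (κ * C₁) * ‖x₁ - x₂‖

/-- the estimate of condition (E'∞) with no ball restriction (the case `ρ_A = ∞`) -/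
def Econd'All (C₁ R₁ κ : ℝ) : Prop :=
  ∀ z : X, S.emb z ∈ S.H0 → R₁ ≤ ‖S.emb z‖ →
    ∀ x₁ x₂ : X, x₁ ∈ S.Xpm → x₂ ∈ S.Xpm →
      ‖S.Aperp (z + x₁) - S.BinfX x₁ - S.Aperp (z + x₂) + S.BinfX x₂‖ ≤
        1 / (κ * C₁) * ‖x₁ - x₂‖

/-- the uniform smallness estimate of condition (SE∞), on the ball of radius `ρA` -/
def SEcond (ρA : ℝ) : Prop :=
  ∀ ε > (0 : ℝ), ∃ R : ℝ, ∀ z₁ z₂ : X, S.emb z₁ ∈ S.H0 → S.emb z₂ ∈ S.H0 →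
    R ≤ ‖S.emb z₁‖ → R ≤ ‖S.emb z₂‖ →
    ∀ x₁ x₂ : X, x₁ ∈ S.Xpm → x₂ ∈ S.Xpm → ‖x₁‖ < ρA → ‖x₂‖ < ρA →
      ‖S.Aperp (z₁ + x₁) - S.BinfX x₁ - S.Aperp (z₂ + x₂) + S.BinfX x₂‖ ≤
        ε * ‖z₁ + x₁ - z₂ - x₂‖

/-- the estimate of condition (SE∞) with no ball restriction (the case `ρ_A = ∞`) -/
def SEcondAll : Prop :=
  ∀ ε > (0 : ℝ), ∃ R : ℝ, ∀ z₁ z₂ : X, S.emb z₁ ∈ S.H0 → S.emb z₂ ∈ S.H0 →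
    R ≤ ‖S.emb z₁‖ → R ≤ ‖S.emb z₂‖ →
    ∀ x₁ x₂ : X, x₁ ∈ S.Xpm → x₂ ∈ S.Xpm →
      ‖S.Aperp (z₁ + x₁) - S.BinfX x₁ - S.Aperp (z₂ + x₂) + S.BinfX x₂‖ ≤
        ε * ‖z₁ + x₁ - z₂ - x₂‖

/-- condition (D∞) -/
def Dinf : Prop :=
  ∃ (P Q : X → H →L[ℝ] H) (Pi Qi : H →L[ℝ] H),
    (∀ x : X, S.emb x ∈ S.V → S.B x = P x + Q x) ∧
    S.Binf = Pi + Qi ∧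
    (∀ x : X, S.emb x ∈ S.V → ∀ u : H, u ≠ 0 → 0 < ⟪P x u, u⟫) ∧
    (∀ u : H, u ≠ 0 → 0 < ⟪Pi u, u⟫) ∧
    (∀ x : X, S.emb x ∈ S.V → IsCompactOperator (⇑(Q x))) ∧
    IsCompactOperator (⇑Qi) ∧
    (∀ μ : ℝ, μ < 0 → ∀ u : H, S.Binf u = μ • u → ∃ x : X, S.emb x = u) ∧
    (∀ xk : ℕ → X, (∀ k, S.emb (xk k) ∈ S.V) →
      Filter.Tendsto (fun k => ‖S.emb (xk k)‖) atTop atTop →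
      ∀ u : H, Filter.Tendsto (fun k => P (xk k) u) atTop (𝓝 (Pi u))) ∧
    (∀ ε > (0 : ℝ), ∃ R : ℝ, ∀ x : X, S.emb x ∈ S.V → R ≤ ‖S.emb x‖ → ‖Q x - Qi‖ ≤ ε) ∧
    (∀ xn : ℕ → X, (∀ n, S.emb (xn n) ∈ S.V) →
      Filter.Tendsto (fun n => ‖S.emb (xn n)‖) atTop atTop →
      ∃ C₀ > (0 : ℝ), ∃ n₀ : ℕ, ∀ n ≥ n₀, ∀ u : H, C₀ * ‖u‖ ^ 2 ≤ ⟪P (xn n) u, u⟫)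

/-- `L(u) = ½(B(∞)u, u)_H + o(‖u‖²)` as `‖u‖ → ∞` -/
def QuadAtInfty : Prop :=
  ∀ ε > (0 : ℝ), ∃ R : ℝ, ∀ u : H, R ≤ ‖u‖ →
    |S.L u - 2⁻¹ * ⟪S.Binf u, u⟫| ≤ ε * ‖u‖ ^ 2

end LuSetting

namespace LuSetting

variable {X H : Type*} [NormedAddCommGroup X] [NormedSpace ℝ X]
  [NormedAddCommGroup H] [InnerProductSpace ℝ H] [CompleteSpace H]
variable (S : LuSetting X H)

/-! ### Orthogonality and continuity -/

lemma orth_H0_Hpm {u v : H} (hu : u ∈ S.H0) (hv : v ∈ S.Hpm) : ⟪u, v⟫ = 0 := by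
  obtain ⟨a, ha, b, hb, rfl⟩ := Submodule.mem_sup.1 hv
  rw [inner_add_right, S.orth_0p u hu a ha, S.orth_0m u hu b hb, add_zero]

lemma P0_mem (u : H) : S.P0 u ∈ S.H0 := by
  have hu : u ∈ S.H0 ⊔ S.Hp ⊔ S.Hm := by rw [S.span_all]; trivial
  obtain ⟨w, hw, c, hc, rfl⟩ := Submodule.mem_sup.1 hu
  obtain ⟨a, ha, b, hb, rfl⟩ := Submodule.mem_sup.1 hw
  rw [map_add, map_add, S.P0_H0 a ha, S.P0_Hp b hb, S.P0_Hm c hc, add_zero, add_zero]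
  exact ha

lemma norm_le_norm_add {z x : X} (hz : S.emb z ∈ S.H0) (hx : x ∈ S.Xpm) :
    ‖S.emb z‖ ≤ ‖S.emb (z + x)‖ := by
  have ho : ⟪S.emb z, S.emb x⟫ = 0 := S.orth_H0_Hpm hz hx
  have h1 := norm_add_sq_eq_norm_sq_add_norm_sq_real ho
  rw [map_add]
  nlinarith [norm_nonneg (S.emb z), norm_nonneg (S.emb x), norm_nonneg (S.emb z + S.emb x)]

lemma continuousAt_A {x : X} (hx : S.emb x ∈ S.V) : ContinuousAt S.A x :=
  S.A_cont.continuousAt ((S.V_open.preimage S.emb.continuous).mem_nhds hx)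

lemma continuousAt_Aperp {x : X} (hx : S.emb x ∈ S.V) : ContinuousAt S.Aperp x :=
  (S.continuousAt_A hx).sub (S.P0X.continuous.continuousAt.comp (S.continuousAt_A hx))

/-! ### Fréchet differentiability of the functional on `X` -/

/-- `L ∘ emb` is Fréchet differentiable in the `X`-norm: its directional derivative
`(A(x), ·)_H` depends continuously on `x` in the operator norm. -/
lemma hasFDerivAt_L_emb {p : X} (hp : S.emb p ∈ S.V) :
    HasFDerivAt (fun x : X => S.L (S.emb x))
      (((innerSL ℝ) (S.emb (S.A p))).comp S.emb) p := by
  rw [hasFDerivAt_iff_isLittleO, Asymptotics.isLittleO_iff]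
  intro ε hε
  have h1 : ∀ᶠ x in 𝓝 p, ‖S.A x - S.A p‖ < ε ∧ S.emb x ∈ S.V := by
    refine Filter.Eventually.and ?_ ((S.V_open.preimage S.emb.continuous).mem_nhds hp)
    have := (S.continuousAt_A hp).eventually (Metric.ball_mem_nhds (S.A p) hε)
    simpa [dist_eq_norm] using this
  obtain ⟨δ, hδ, hball⟩ := Metric.eventually_nhds_iff_ball.1 h1
  filter_upwards [Metric.ball_mem_nhds p hδ] with q hq
  set v : X := q - p with hv
  have hvδ : ‖v‖ < δ := by simpa [dist_eq_norm] using hq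
  set c : ℝ := ⟪S.emb (S.A p), S.emb v⟫ with hc
  let w : ℝ → X := fun s => p + s • v
  have hw : ∀ s ∈ Icc (0 : ℝ) 1, w s ∈ Metric.ball p δ := by
    intro s hs
    have : ‖s • v‖ ≤ ‖v‖ := by
      rw [norm_smul, Real.norm_of_nonneg hs.1]
      exact mul_le_of_le_one_left (norm_nonneg _) hs.2
    simpa [w, dist_eq_norm] using this.trans_lt hvδ
  have hd : ∀ s ∈ Icc (0 : ℝ) 1, HasDerivWithinAt (fun s : ℝ => S.L (S.emb (w s)) - s * c)
      (⟪S.emb (S.A (w s)), S.emb v⟫ - c) (Icc 0 1) s := by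
    intro s hs
    have hV := (hball _ (hw s hs)).2
    have h2 : HasDerivAt (fun s : ℝ => S.L (S.emb (w s))) ⟪S.emb (S.A (w s)), S.emb v⟫ s := by
      rw [hasDerivAt_iff_tendsto_slope_zero, ← S.A_repr _ hV v]
      refine (S.DL_deriv _ hV (S.emb v)).congr fun t => ?_
      have : S.emb (w (s + t)) = S.emb (w s) + t • S.emb v := by
        simp only [w, map_add, map_smul, add_smul, add_assoc]
      rw [this, smul_eq_mul, div_eq_inv_mul]
    have h3 : HasDerivAt (fun s : ℝ => s * c) c s := by
      simpa using (hasDerivAt_id s).mul_const c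
    exact (h2.sub h3).hasDerivWithinAt
  have hb : ∀ s ∈ Ico (0 : ℝ) 1, ‖⟪S.emb (S.A (w s)), S.emb v⟫ - c‖ ≤ ε * ‖v‖ := by
    intro s hs
    have h4 := (hball _ (hw s ⟨hs.1, hs.2.le⟩)).1
    rw [hc, ← inner_sub_left, ← map_sub]
    refine (norm_inner_le_norm _ _).trans ?_
    gcongr
    · exact (S.emb_norm _).trans h4.le
    · exact S.emb_norm _
  have key := norm_image_sub_le_of_norm_deriv_le_segment_01' hd hb
  have e1 : w 1 = q := by simp [w, hv]
  have e0 : w 0 = p := by simp [w]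
  simp only [e1, e0, one_mul, zero_mul, sub_zero] at key
  have e : S.L (S.emb q) - S.L (S.emb p) -
      (((innerSL ℝ) (S.emb (S.A p))).comp S.emb) v = S.L (S.emb q) - c - S.L (S.emb p) := by
    simp only [ContinuousLinearMap.comp_apply, innerSL_apply_apply, hc]
    ring
  rw [e]
  exact key

/-! ### Lipschitz continuity of the implicit map -/

/-- The estimate of (E∞) persists on the closed ball of radius `ρA`, by continuity of `A`. -/
lemma econd_closed {C₁ R₁ κ ρA : ℝ} (hρA : 0 < ρA) (hR₁V : ∀ u : H, R₁ ≤ ‖u‖ → u ∈ S.V)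
    (hE : S.Econd C₁ R₁ κ ρA) {z₁ z₂ x₁ x₂ : X} (hz₁ : z₁ ∈ S.zdomCl R₁)
    (hz₂ : z₂ ∈ S.zdomCl R₁) (hx₁ : x₁ ∈ S.Xpm) (hx₂ : x₂ ∈ S.Xpm)
    (hn₁ : ‖x₁‖ ≤ ρA) (hn₂ : ‖x₂‖ ≤ ρA) :
    ‖S.Aperp (z₁ + x₁) - S.BinfX x₁ - S.Aperp (z₂ + x₂) + S.BinfX x₂‖ ≤
        1 / (κ * C₁) * ‖z₁ + x₁ - z₂ - x₂‖ := by
  -- pass to the limit `t → 1⁻` in the estimate for `t • x₁`, `t • x₂`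
  have hs : ∀ x : X, Tendsto (fun t : ℝ => t • x) (𝓝[<] 1) (𝓝 x) := fun x => by
    have : Continuous fun t : ℝ => t • x := by fun_prop
    simpa using (this.tendsto 1).mono_left nhdsWithin_le_nhds
  have hA : ∀ z ∈ S.zdomCl R₁, ∀ x ∈ S.Xpm,
      Tendsto (fun t : ℝ => S.Aperp (z + t • x)) (𝓝[<] 1) (𝓝 (S.Aperp (z + x))) := by
    intro z hz x hx
    have hV := hR₁V _ (hz.2.trans (S.norm_le_norm_add hz.1 hx))
    exact (S.continuousAt_Aperp hV).tendsto.comp ((hs x).const_add z)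
  have hB : ∀ x : X, Tendsto (fun t : ℝ => S.BinfX (t • x)) (𝓝[<] 1) (𝓝 (S.BinfX x)) :=
    fun x => (S.BinfX.continuous.tendsto x).comp (hs x)
  have hsmall : ∀ x : X, ‖x‖ ≤ ρA → ∀ t ∈ Ioo (0 : ℝ) 1, ‖t • x‖ < ρA := by
    intro x hx t ht
    rw [norm_smul, Real.norm_of_nonneg ht.1.le]
    nlinarith [ht.1, ht.2, norm_nonneg x]
  refine le_of_tendsto_of_tendsto
    ((((hA z₁ hz₁ x₁ hx₁).sub (hB x₁)).sub (hA z₂ hz₂ x₂ hx₂)).add (hB x₂)).norm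
    (((((hs x₁).const_add z₁).sub_const z₂).sub (hs x₂)).norm.const_mul (1 / (κ * C₁))) ?_
  filter_upwards [Ioo_mem_nhdsLT (zero_lt_one' ℝ)] with t ht
  exact hE z₁ z₂ hz₁.1 hz₂.1 hz₁.2 hz₂.2 _ _ (S.Xpm.smul_mem t hx₁) (S.Xpm.smul_mem t hx₂)
    (hsmall _ hn₁ t ht) (hsmall _ hn₂ t ht)

/-- Subtracting the two equations `(I − P⁰∞)A(zᵢ + h(zᵢ)) = θ` turns (E∞) into
`‖B(∞)(h z₁ - h z₂)‖ ≤ ‖z₁ + h z₁ - z₂ - h z₂‖ / (κ C₁)`; inverting `B(∞)` on `X^±∞` costs a factor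
`C₁`, and `κ > 1` lets the term `‖h z₁ - h z₂‖` be absorbed on the left. -/
lemma lipschitz_h {C₁ R₁ κ ρA : ℝ} (hC₁ : S.InvBound C₁) (hκ : 1 < κ) (hρA : 0 < ρA)
    (hR₁V : ∀ u : H, R₁ ≤ ‖u‖ → u ∈ S.V)
    (hρ : (∃ m, S.MBound m) ∨ S.EcondAll C₁ R₁ κ)
    (hE : S.Econd C₁ R₁ κ ρA) {h : X → X}
    (hmem : ∀ z ∈ S.zdomCl R₁, h z ∈ S.Xpm)
    (hball : (∃ m, S.MBound m) → ∀ z ∈ S.zdomCl R₁, ‖h z‖ ≤ ρA)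
    (heq : ∀ z ∈ S.zdomCl R₁, S.Aperp (z + h z) = 0)
    {z₁ z₂ : X} (hz₁ : z₁ ∈ S.zdomCl R₁) (hz₂ : z₂ ∈ S.zdomCl R₁) :
    ‖h z₁ - h z₂‖ ≤ 1 / (κ - 1) * ‖z₁ - z₂‖ := by
  have hx₁ := hmem z₁ hz₁
  have hx₂ := hmem z₂ hz₂
  have h1 : ‖S.Aperp (z₁ + h z₁) - S.BinfX (h z₁) - S.Aperp (z₂ + h z₂) + S.BinfX (h z₂)‖ ≤
        1 / (κ * C₁) * ‖z₁ + h z₁ - z₂ - h z₂‖ := by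
    rcases hρ with hm | hall
    · exact S.econd_closed hρA hR₁V hE hz₁ hz₂ hx₁ hx₂ (hball hm z₁ hz₁) (hball hm z₂ hz₂)
    · exact hall z₁ z₂ hz₁.1 hz₂.1 hz₁.2 hz₂.2 _ _ hx₁ hx₂
  have e1 : S.Aperp (z₁ + h z₁) - S.BinfX (h z₁) - S.Aperp (z₂ + h z₂) + S.BinfX (h z₂) =
      -S.BinfX (h z₁ - h z₂) := by
    rw [heq z₁ hz₁, heq z₂ hz₂, map_sub]; abel
  have e2 : z₁ + h z₁ - z₂ - h z₂ = (z₁ - z₂) + (h z₁ - h z₂) := by abel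
  rw [e1, e2, norm_neg] at h1
  have hC := hC₁.1
  have h2 := hC₁.2.2.2 _ (S.Xpm.sub_mem hx₁ hx₂)
  have h3 : κ * ‖h z₁ - h z₂‖ ≤ ‖z₁ - z₂‖ + ‖h z₁ - h z₂‖ := by
    have hk : (0 : ℝ) < κ := by linarith
    calc κ * ‖h z₁ - h z₂‖
        ≤ κ * (C₁ * (1 / (κ * C₁) * ‖(z₁ - z₂) + (h z₁ - h z₂)‖)) := by
          gcongr
          exact h2.trans (by gcongr)
      _ = ‖(z₁ - z₂) + (h z₁ - h z₂)‖ := by field_simp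
      _ ≤ _ := norm_add_le _ _
  rw [one_div, ← div_eq_inv_mul, le_div_iff₀ (by linarith)]
  linarith

end LuSetting

/-- Lemma 2.2(iv): under (S), (F1∞)–(F3∞), (C1∞)–(C2∞) and (E∞),
for the unique map `h∞` with `(I−P⁰∞)A(z + h∞(z)) = θ`, the function
`L∞(z) = L(z + h∞(z))` is `C¹` on `{z ∈ H⁰∞ : ‖z‖ > R₁}` with
`dL∞(z₀)(z) = (A(z₀ + h∞(z₀)), z)_H`. -/
theorem statement10 {X H : Type*} [NormedAddCommGroup X] [NormedSpace ℝ X]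
    [NormedAddCommGroup H] [InnerProductSpace ℝ H] [CompleteSpace H]
    (S : LuSetting X H)
    (C₁ κ R₁ ρA : ℝ) (hC₁ : S.InvBound C₁) (hκ : 1 < κ) (hρA : 0 < ρA)
    (hR₁V : ∀ u : H, R₁ ≤ ‖u‖ → u ∈ S.V)
    (hρ : (∃ m, S.MBound m ∧ κ / (κ - 1) * C₁ * m < ρA) ∨ S.EcondAll C₁ R₁ κ)
    (hE : S.Econd C₁ R₁ κ ρA)
    -- the map h∞ with its defining properties
    (h : X → X)
    (hmem : ∀ z ∈ S.zdomCl R₁, h z ∈ S.Xpm)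
    (hball : (∃ m, S.MBound m) → ∀ z ∈ S.zdomCl R₁, ‖h z‖ ≤ ρA)
    (heq : ∀ z ∈ S.zdomCl R₁, S.Aperp (z + h z) = 0) :
    -- L∞ is continuously Fréchet differentiable with the stated differential
    (∀ z₀ ∈ S.zdom R₁,
      HasFDerivWithinAt (fun z : X => S.L (S.emb z + S.emb (h z)))
        (((innerSL ℝ) (S.emb (S.A (z₀ + h z₀)))).comp S.emb)
        {z : X | S.emb z ∈ S.H0} z₀) ∧
    ContinuousOn
      (fun z₀ : X => ((innerSL ℝ) (S.emb (S.A (z₀ + h z₀)))).comp S.emb)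
      (S.zdom R₁) := by
  have hsub : S.zdom R₁ ⊆ S.zdomCl R₁ := fun z hz => ⟨hz.1, hz.2.le⟩
  have hlip : ∀ z₁ ∈ S.zdomCl R₁, ∀ z₂ ∈ S.zdomCl R₁,
      ‖h z₁ - h z₂‖ ≤ 1 / (κ - 1) * ‖z₁ - z₂‖ := fun z₁ hz₁ z₂ hz₂ =>
    S.lipschitz_h hC₁ hκ hρA hR₁V (hρ.imp_left fun ⟨m, hm, _⟩ => ⟨m, hm⟩) hE hmem hball heq
      hz₁ hz₂
  have hk : 0 ≤ 1 / (κ - 1) := one_div_nonneg.2 (by linarith)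
  have hcont : ContinuousOn (fun z => z + h z) (S.zdomCl R₁) := by
    refine continuousOn_id.add (LipschitzOnWith.of_dist_le_mul (K := ⟨1 / (κ - 1), hk⟩)
      fun z₁ hz₁ z₂ hz₂ => ?_).continuousOn
    rw [dist_eq_norm, dist_eq_norm]
    exact hlip z₁ hz₁ z₂ hz₂
  have hV : ∀ z ∈ S.zdomCl R₁, S.emb (z + h z) ∈ S.V := fun z hz =>
    hR₁V _ (hz.2.trans (S.norm_le_norm_add hz.1 (hmem z hz)))
  refine ⟨fun z₀ hz₀ => ?_, ?_⟩
  · have hz₀' := hsub hz₀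
    have hnear : ∀ᶠ z in 𝓝[{z : X | S.emb z ∈ S.H0}] z₀, z ∈ S.zdomCl R₁ := by
      have hopen : ∀ᶠ z in 𝓝 z₀, R₁ < ‖S.emb z‖ :=
        S.emb.continuous.norm.continuousAt.eventually (lt_mem_nhds hz₀.2)
      filter_upwards [self_mem_nhdsWithin, hopen.filter_mono nhdsWithin_le_nhds] with z h1 h2
      exact ⟨h1, h2.le⟩
    have ht : Tendsto (fun z => z + h z) (𝓝[{z : X | S.emb z ∈ S.H0}] z₀)
        (𝓝 (z₀ + h z₀)) :=
      (hcont z₀ hz₀').mono_left (le_inf nhdsWithin_le_nhds (le_principal_iff.2 hnear))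
    -- `A (z₀ + h z₀)` lies in `H⁰∞`, so it does not see increments of `h`
    have hA0 : S.emb (S.A (z₀ + h z₀)) ∈ S.H0 := by
      have : S.A (z₀ + h z₀) = S.P0X (S.A (z₀ + h z₀)) := sub_eq_zero.1 (heq z₀ hz₀')
      rw [this, S.P0X_emb]
      exact S.P0_mem _
    have hbig : (fun z => z + h z - (z₀ + h z₀)) =O[𝓝[{z : X | S.emb z ∈ S.H0}] z₀]
        fun z => z - z₀ := by
      refine Asymptotics.IsBigO.of_bound (1 + 1 / (κ - 1)) ?_
      filter_upwards [hnear] with z hz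
      have e : z + h z - (z₀ + h z₀) = (z - z₀) + (h z - h z₀) := by abel
      rw [e, add_mul, one_mul]
      exact (norm_add_le _ _).trans (by gcongr; exact hlip z hz z₀ hz₀')
    have hmain := ((hasFDerivAt_iff_isLittleO.1
      (S.hasFDerivAt_L_emb (hV z₀ hz₀'))).comp_tendsto ht).trans_isBigO hbig
    refine .of_isLittleO (hmain.congr' ?_ .rfl)
    filter_upwards [hnear] with z hz
    have ho : ⟪S.emb (S.A (z₀ + h z₀)), S.emb (h z - h z₀)⟫ = 0 :=
      S.orth_H0_Hpm hA0 (S.Xpm.sub_mem (hmem z hz) (hmem z₀ hz₀'))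
    have e : z + h z - (z₀ + h z₀) = (z - z₀) + (h z - h z₀) := by abel
    simp only [Function.comp_apply, ContinuousLinearMap.comp_apply, innerSL_apply_apply]
    rw [e, map_add S.emb (z - z₀), inner_add_right, ho, add_zero, map_add, map_add]
  · have hAc : ContinuousOn (fun z => S.A (z + h z)) (S.zdom R₁) :=
      S.A_cont.comp (hcont.mono hsub) fun z hz => hV z (hsub hz)
    exact (((innerSL ℝ).continuous.comp S.emb.continuous).comp_continuousOn hAc).clm_comp
      continuousOn_const
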